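/- In C[t, z_{11}, ..., z_{nn}], for all 0 ≤ i < j ≤ n the ideal J_i^t + K_j is prime, where J_i^t = ⟨t z_{1k} + z_{nk} : 1 ≤ k ≤ i⟩ (with J_0^t = 0) and K_j is generated by all j×j minors of the matrix (z_{kℓ}) with row indices from {2,...,n} and column indices 1,...,j (with K_n = 0). -/

import Mathlib

open MvPolynomial

/-- The variable `t` in `ℂ[t, z_{ij} : 1 ≤ i, j ≤ n]`. -/
noncomputable def tt (n : ℕ) : MvPolynomial (Option (Fin n × Fin n)) ℂ := X none

/-- The variable `z_{ij}` in `ℂ[t, z_{ij} : 1 ≤ i, j ≤ n]` (`0`-based indexing). -/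
noncomputable def zz (n : ℕ) (i j : Fin n) : MvPolynomial (Option (Fin n × Fin n)) ℂ :=
  X (some (i, j))

/-- The first row index (row `1` in `1`-based indexing). -/
def row1 (n : ℕ) [NeZero n] : Fin n := ⟨0, Nat.pos_of_ne_zero (NeZero.ne n)⟩

/-- The last row index (row `n` in `1`-based indexing). -/
def rowN (n : ℕ) [NeZero n] : Fin n :=
  ⟨n - 1, Nat.sub_lt (Nat.pos_of_ne_zero (NeZero.ne n)) one_pos⟩

/-- The ideal `J_i^t = ⟨t z_{11} + z_{n1}, …, t z_{1i} + z_{ni}⟩` (so `J_0^t = 0`). -/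
noncomputable def Jt (n : ℕ) [NeZero n] (i : ℕ) :
    Ideal (MvPolynomial (Option (Fin n × Fin n)) ℂ) :=
  Ideal.span {f | ∃ k : Fin n, (k : ℕ) < i ∧ f = tt n * zz n (row1 n) k + zz n (rowN n) k}

/-- The ideal `K_j`, generated by the `j × j` minors `p_B` of `(z_{kℓ})` with row set
`B ⊆ {2, …, n}`, `|B| = j`, and columns `1, …, j`.  (For `j ≤ n` the column index
`b % n` is just `b`; for `j = n` no admissible `B` exists, so `K_n = 0`, and
`K_0 = ⟨det of the empty matrix⟩ = ⊤`, matching the conventions.) -/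
noncomputable def Kt (n : ℕ) [NeZero n] (j : ℕ) :
    Ideal (MvPolynomial (Option (Fin n × Fin n)) ℂ) :=
  Ideal.span {f | ∃ B : Fin j → Fin n, StrictMono B ∧ (∀ a, 1 ≤ (B a : ℕ)) ∧
    f = Matrix.det (Matrix.of fun a b : Fin j =>
      zz n (B a) ⟨(b : ℕ) % n, Nat.mod_lt _ (Nat.pos_of_ne_zero (NeZero.ne n))⟩)}

/-!
Treating the entries of the submatrix as fresh variables over the original ring `A` exhibits
`J_i^t + K_j` as a retract (hence a contraction) of the ideal of matrices of rank less than `j`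
whose last row is prescribed, and nonzero, outside the last column. That ideal turns out to be the
kernel of the parametrization expressing the last column as a linear combination of the others,
hence is prime.

Let a diagonal be a monomial `∏ z (B b, b)` over all columns `b` with `B` strictly increasing. It
is the heaviest term of a minor for a suitable weight, so polynomials without diagonals and
without the prescribed entries span the quotient. On the other hand, a nonzero polynomial without
the prescribed entries that vanishes on the parametrized locus contains a diagonal: proceed row by
row, and in row `q` with leading column `c` let the entry `(q, c)` tend to infinity, which leaves
the leading part of the polynomial in that entry, vanishing on the locus for the next row and the
next column.
-/

section SingleVariable

variable {σ K : Type*}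

theorem eval_congr_of_vars [CommSemiring K] {f : MvPolynomial σ K} {z w : σ → K}
    (h : ∀ s ∈ f.vars, z s = w s) : eval z f = eval w f :=
  eval₂Hom_congr' rfl (fun s hs _ => h s hs) rfl

variable [DecidableEq σ]

/-- The part of `f` that is homogeneous of degree `k` in the single variable `x`. -/
noncomputable def componentIn [CommSemiring K] (x : σ) (k : ℕ) (f : MvPolynomial σ K) :
    MvPolynomial σ K :=
  weightedHomogeneousComponent (Pi.single x 1) k f

theorem coeff_componentIn [CommSemiring K] (x : σ) (k : ℕ) (f : MvPolynomial σ K) (d : σ →₀ ℕ) :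
    coeff d (componentIn x k f) = if d x = k then coeff d f else 0 := by
  rw [componentIn, coeff_weightedHomogeneousComponent, Finsupp.weight_single_one_apply]

theorem mem_support_componentIn [CommSemiring K] {x : σ} {k : ℕ} {f : MvPolynomial σ K}
    {d : σ →₀ ℕ} : d ∈ (componentIn x k f).support ↔ d ∈ f.support ∧ d x = k := by
  simp only [mem_support_iff, coeff_componentIn, ne_eq, ite_eq_right_iff, Classical.not_imp,
    and_comm]

theorem vars_componentIn_subset [CommSemiring K] (x : σ) (k : ℕ) (f : MvPolynomial σ K) :
    (componentIn x k f).vars ⊆ f.vars := fun s hs => by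
  obtain ⟨d, hd, hds⟩ := (mem_vars_iff_mem_support s).mp hs
  exact (mem_vars_iff_mem_support s).mpr ⟨d, (mem_support_componentIn.mp hd).1, hds⟩

theorem sum_componentIn [CommSemiring K] (x : σ) (f : MvPolynomial σ K) :
    ∑ k ∈ Finset.range (f.degreeOf x + 1), componentIn x k f = f := by
  ext d
  simp only [coeff_sum, coeff_componentIn, Finset.sum_ite_eq, Finset.mem_range, Nat.lt_succ_iff,
    ite_eq_left_iff]
  exact fun hd => (notMem_support_iff.mp fun h => hd (monomial_le_degreeOf x h)).symm

theorem componentIn_degreeOf_ne_zero [CommSemiring K] (x : σ) {f : MvPolynomial σ K}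
    (hf : f ≠ 0) : componentIn x (f.degreeOf x) f ≠ 0 := by
  obtain ⟨d, hd, hdx⟩ := f.support.exists_mem_eq_sup (support_nonempty.mpr hf) fun d => d x
  rw [← support_nonempty]
  exact ⟨d, mem_support_componentIn.mpr ⟨hd, by rw [degreeOf_eq_sup, hdx]⟩⟩

theorem eval_componentIn [CommSemiring K] (x : σ) (k : ℕ) (f : MvPolynomial σ K) (z : σ → K) :
    eval z (componentIn x k f) =
      z x ^ k * eval (Function.update z x 1) (componentIn x k f) := by
  rw [eval_eq, eval_eq, Finset.mul_sum]
  refine Finset.sum_congr rfl fun d hd => ?_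
  have hprod : ∀ w : σ → K,
      ∏ s ∈ d.support, w s ^ d s = w x ^ k * (d.erase x).prod fun s e => w s ^ e := fun w => by
    rw [← (mem_support_componentIn.mp hd).2]
    exact (Finsupp.mul_prod_erase' d x (fun s e => w s ^ e) fun s => pow_zero _).symm
  have herase : ((d.erase x).prod fun s e => Function.update z x 1 s ^ e) =
      (d.erase x).prod fun s e => z s ^ e :=
    Finsupp.prod_congr fun s hs => by
      rw [Finsupp.support_erase] at hs
      rw [Function.update_of_ne (Finset.ne_of_mem_erase hs)]
  rw [hprod, hprod, herase, Function.update_self, one_pow, one_mul, mul_left_comm]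

-- Multiplying by `ε ^ degreeOf x f` clears the pole and leaves only the leading part at `ε = 0`.
theorem eval_componentIn_degreeOf_eq_zero_of_pole [Field K] [Infinite K] {x : σ}
    {f : MvPolynomial σ K} (γ : σ → Polynomial K)
    (h : ∀ᶠ ε in Filter.cofinite,
      eval (Function.update (fun s => (γ s).eval ε) x ε⁻¹) f = 0) :
    eval (Function.update (fun s => (γ s).eval 0) x 1) (componentIn x (f.degreeOf x) f) = 0 := by
  set m := f.degreeOf x
  let P : Polynomial K := ∑ k ∈ Finset.range (m + 1),
    Polynomial.X ^ (m - k) * aeval (Function.update γ x 1) (componentIn x k f)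
  have eval_P (ε : K) : P.eval ε = ∑ k ∈ Finset.range (m + 1), ε ^ (m - k) *
      eval (Function.update (fun s => (γ s).eval ε) x 1) (componentIn x k f) := by
    have hpoint : (fun s => (Function.update γ x 1 s).eval ε) =
        Function.update (fun s => (γ s).eval ε) x 1 := by
      funext s
      rcases eq_or_ne s x with rfl | hs <;> simp [*]
    have hcurve (p : MvPolynomial σ K) : (aeval (Function.update γ x 1) p).eval ε =
        eval (Function.update (fun s => (γ s).eval ε) x 1) p := by
      rw [← hpoint, ← Polynomial.coe_aeval_eq_eval, ← AlgHom.comp_apply, comp_aeval]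
      rfl
    simp [P, Polynomial.eval_finsetSum, hcurve]
  have hP : P = 0 := by
    refine Polynomial.eq_zero_of_infinite_isRoot P
      (Filter.frequently_cofinite_iff_infinite.mp (Filter.Eventually.frequently ?_))
    filter_upwards [h, Filter.eventually_cofinite_ne 0] with ε hε hε0
    rw [Polynomial.IsRoot, eval_P, ← mul_zero (ε ^ m), ← hε]
    conv_rhs => rw [← sum_componentIn x f, map_sum, Finset.mul_sum]
    refine Finset.sum_congr rfl fun k hk => ?_
    rw [eval_componentIn x k f (Function.update _ x ε⁻¹), Function.update_idem,
      Function.update_self, ← mul_assoc, inv_pow,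
      pow_sub₀ ε hε0 (Nat.lt_succ_iff.mp (Finset.mem_range.mp hk))]
  have h0 := eval_P 0
  rw [hP, Polynomial.eval_zero, Finset.sum_range_succ, Finset.sum_eq_zero, zero_add, Nat.sub_self,
    pow_zero, one_mul] at h0
  · exact h0.symm
  · intro k hk
    rw [zero_pow (Nat.sub_ne_zero_of_lt (Finset.mem_range.mp hk)), zero_mul]

end SingleVariable

section NormalForm

theorem restrictSupport_sup_eq_top {σ A : Type*} [CommRing A] (w : σ → ℕ)
    {I : Ideal (MvPolynomial σ A)} {S : Set (σ →₀ ℕ)}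
    (h : ∀ d ∉ S, ∃ e ≤ d, ∃ p ∈ I,
      monomial e 1 - p ∈ restrictSupport A {c | Finsupp.weight w c < Finsupp.weight w e}) :
    restrictSupport A S ⊔ I.restrictScalars A = ⊤ := by
  set N := restrictSupport A S ⊔ I.restrictScalars A
  suffices hmon : ∀ d, monomial d 1 ∈ N by
    rw [eq_top_iff, ← restrictSupport_univ, restrictSupport_eq_span, Submodule.span_le]
    rintro _ ⟨d, -, rfl⟩
    exact hmon d
  intro d
  induction hd : Finsupp.weight w d using Nat.strong_induction_on generalizing d with
  | _ k ih =>
  by_cases hdS : d ∈ S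
  · exact Submodule.mem_sup_left ((monomial_mem_restrictSupport A).mpr (.inl hdS))
  obtain ⟨e, hed, p, hp, hlower⟩ := h d hdS
  obtain ⟨c, rfl⟩ := exists_add_of_le hed
  have hsplit : monomial (e + c) (1 : A) =
      (monomial e 1 - p) * monomial c 1 + p * monomial c 1 := by
    rw [← add_mul, sub_add_cancel, monomial_mul, one_mul]
  have hlower' : restrictSupport A {b | Finsupp.weight w b < Finsupp.weight w e} ≤
      N.comap (LinearMap.mulRight A (monomial c 1)) := by
    rw [restrictSupport_eq_span, Submodule.span_le]
    rintro _ ⟨b, hb, rfl⟩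
    rw [SetLike.mem_coe, Submodule.mem_comap, LinearMap.mulRight_apply, monomial_mul, one_mul]
    refine ih _ ?_ _ rfl
    rw [← hd, map_add, map_add]
    exact Nat.add_lt_add_right hb _
  rw [hsplit]
  exact N.add_mem (hlower' hlower) (Submodule.mem_sup_right (I.mul_mem_right _ hp))

end NormalForm

section MaximalMinors

/-- The ideal generated by the maximal minors of a matrix with `k` columns. -/
def maximalMinors {ρ R : Type*} [Preorder ρ] [CommRing R] {k : ℕ} (M : Matrix ρ (Fin k) R) :
    Ideal R :=
  Ideal.span (Set.range fun B : Fin k ↪o ρ => (M.submatrix B id).det)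

theorem map_maximalMinors {ρ R S : Type*} [Preorder ρ] [CommRing R] [CommRing S] {k : ℕ}
    (φ : R →+* S) (M : Matrix ρ (Fin k) R) :
    (maximalMinors M).map φ = maximalMinors (M.map φ) := by
  rw [maximalMinors, Ideal.map_span, ← Set.range_comp]
  congr 2
  ext B
  exact φ.map_det _

theorem det_eq_zero_of_last_col_eq_dotProduct {R : Type*} [CommRing R] {l : ℕ}
    {M : Matrix (Fin (l + 1)) (Fin (l + 1)) R} {v : Fin l → R}
    (h : ∀ r, M r (Fin.last l) = (fun b : Fin l => M r b.castSucc) ⬝ᵥ v) : M.det = 0 := by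
  let x : Fin (l + 1) → R := Fin.snoc v (-1)
  have hx : M.mulVec x = 0 := by
    ext r
    simp [x, Matrix.mulVec, dotProduct, Fin.sum_univ_castSucc, h]
  have hdet : M.det • x = 0 := by
    rw [← Matrix.one_mulVec x, ← Matrix.smul_mulVec, ← Matrix.adjugate_mul,
      ← Matrix.mulVec_mulVec, hx, Matrix.mulVec_zero]
  simpa [x] using congrFun hdet (Fin.last l)

theorem sum_comp_perm_mul_lt {ι : Type*} [Fintype ι] [LinearOrder ι] {f g : ι → ℕ}
    (hf : StrictMono f) (hg : StrictMono g) {τ : Equiv.Perm ι} (hτ : τ ≠ 1) :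
    ∑ b, f (τ b) * g b < ∑ b, f b * g b := by
  refine (hf.monotone.monovary hg.monotone).sum_comp_perm_mul_lt_sum_mul_iff.mpr fun h => hτ ?_
  have hmono : StrictMono τ := by
    refine Monotone.strictMono_of_injective (fun a b hab => ?_) τ.injective
    rcases hab.eq_or_lt with rfl | hab
    · exact le_rfl
    · exact hf.le_iff_le.mp (h (hg hab))
  ext a
  exact congrArg (· a) (Subsingleton.elim (hmono.orderIsoOfSurjective τ τ.surjective) (.refl ι))

theorem sum_single_one_le {ι σ : Type*} [Fintype ι] {x : ι → σ}
    (hx : Function.Injective x) {d : σ →₀ ℕ} (hd : ∀ b, d (x b) ≠ 0) :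
    ∑ b, Finsupp.single (x b) 1 ≤ d := by
  classical
  intro s
  rw [Finsupp.finsetSum_apply]
  by_cases hs : ∃ b, x b = s
  · obtain ⟨b, rfl⟩ := hs
    simp only [Finsupp.single_apply, hx.eq_iff, Finset.sum_ite_eq', Finset.mem_univ, if_true]
    exact Nat.one_le_iff_ne_zero.mpr (hd b)
  · push Not at hs
    simp [hs]

variable {m l : ℕ}

/-- A weight on the entries of a matrix for which the diagonal monomial of every minor is strictly
heavier than the other monomials of that minor. -/
def diagonalWeight (x : Fin (m + 1) × Fin (l + 1)) : ℕ := ((x.1 : ℕ) + 1) * ((x.2 : ℕ) + 1)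

theorem diagonal_sub_det_mem_restrictSupport (A : Type*) [CommRing A]
    (B : Fin (l + 1) ↪o Fin (m + 1)) :
    monomial (∑ b, Finsupp.single (B b, b) 1) 1 -
        ((Matrix.mvPolynomialX (Fin (m + 1)) (Fin (l + 1)) A).submatrix B id).det ∈
      restrictSupport A {c | Finsupp.weight diagonalWeight c <
        Finsupp.weight diagonalWeight (∑ b, Finsupp.single (B b, b) 1)} := by
  have hweight (C : Fin (l + 1) → Fin (m + 1)) :
      Finsupp.weight diagonalWeight (∑ b, Finsupp.single (C b, b) 1) =
        ∑ b, ((C b : ℕ) + 1) * ((b : ℕ) + 1) := by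
    simp [Finsupp.weight_single, diagonalWeight]
  have hprod (τ : Equiv.Perm (Fin (l + 1))) :
      ∏ b, (Matrix.mvPolynomialX (Fin (m + 1)) (Fin (l + 1)) A).submatrix B id (τ b) b =
        monomial (∑ b, Finsupp.single (B (τ b), b) 1) 1 :=
    (monomial_sum_one _ _).symm
  simp only [Matrix.det_apply, hprod]
  rw [← Finset.add_sum_erase _ _ (Finset.mem_univ (1 : Equiv.Perm (Fin (l + 1)))),
    Equiv.Perm.sign_one, one_smul]
  simp only [Equiv.Perm.one_apply, sub_add_cancel_left]
  refine neg_mem (sum_mem fun τ hτ => ?_)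
  rw [Units.smul_def]
  refine zsmul_mem ((monomial_mem_restrictSupport A).mpr (.inl ?_)) _
  rw [Set.mem_ofPred_eq, hweight fun b => B (τ b), hweight B]
  exact sum_comp_perm_mul_lt (f := fun b => (B b : ℕ) + 1) (g := fun b => (b : ℕ) + 1)
    (fun _ _ hab => Nat.add_lt_add_right (B.strictMono hab) 1)
    (fun _ _ hab => Nat.add_lt_add_right hab 1) (Finset.ne_of_mem_erase hτ)

end MaximalMinors

section DependencyLocus

variable {m l : ℕ}

/-- The exponent `d` is divisible by the monomial of some strictly increasing choice of entries
`(B b, b)`, one from each column `b ≥ c`, using only rows `≥ q`. -/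
def HasDiagonal (q : Fin (m + 1)) (c : Fin (l + 1)) (d : Fin (m + 1) × Fin (l + 1) →₀ ℕ) : Prop :=
  ∃ B : Fin (l + 1) → Fin (m + 1),
    StrictMonoOn B (Set.Ici c) ∧ ∀ b, c ≤ b → q ≤ B b ∧ d (B b, b) ≠ 0

theorem HasDiagonal.of_succ_row {q : Fin m} {c : Fin (l + 1)}
    {d : Fin (m + 1) × Fin (l + 1) →₀ ℕ} (h : HasDiagonal q.succ c d) :
    HasDiagonal q.castSucc c d := by
  obtain ⟨B, hmono, hB⟩ := h
  exact ⟨B, hmono, fun b hb => ⟨(Fin.castSucc_lt_succ.le).trans (hB b hb).1, (hB b hb).2⟩⟩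

theorem HasDiagonal.cons {q : Fin m} {c : Fin l} {d : Fin (m + 1) × Fin (l + 1) →₀ ℕ}
    (hqc : d (q.castSucc, c.castSucc) ≠ 0) (h : HasDiagonal q.succ c.succ d) :
    HasDiagonal q.castSucc c.castSucc d := by
  obtain ⟨B, hmono, hB⟩ := h
  have hlt {b : Fin (l + 1)} (hb : c.castSucc < b) : q.castSucc < B b :=
    Fin.castSucc_lt_succ.trans_le (hB b (Fin.castSucc_lt_iff_succ_le.mp hb)).1
  refine ⟨Function.update B c.castSucc q.castSucc, fun b hb b' _ hbb' => ?_, fun b hb => ?_⟩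
  · have hb'c : c.castSucc < b' := hb.trans_lt hbb'
    rw [Function.update_of_ne hb'c.ne']
    rcases (Set.mem_Ici.mp hb).eq_or_lt with rfl | hbc
    · rw [Function.update_self]
      exact hlt hb'c
    · rw [Function.update_of_ne hbc.ne']
      exact hmono (Fin.castSucc_lt_iff_succ_le.mp hbc) (Fin.castSucc_lt_iff_succ_le.mp hb'c) hbb'
  · rcases hb.eq_or_lt with rfl | hbc
    · rw [Function.update_self]
      exact ⟨le_rfl, hqc⟩
    · rw [Function.update_of_ne hbc.ne']
      exact ⟨(hlt hbc).le, (hB b (Fin.castSucc_lt_iff_succ_le.mp hbc)).2⟩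

variable {K : Type*} [Field K]

/-- The `(m + 1) × (l + 1)` matrices with last row `a` outside the last column, in whose rows
`≥ q` the last column is a combination of the columns `c, …, l - 1`, with nonzero coefficient at
column `c` if `c < l`. -/
def dependencyLocus (a : Fin l → K) (q : Fin (m + 1)) (c : Fin (l + 1)) :
    Set (Fin (m + 1) × Fin (l + 1) → K) :=
  {z | (∀ b : Fin l, z (Fin.last m, b.castSucc) = a b) ∧
    ∃ v : Fin l → K, (∀ b, b.castSucc < c → v b = 0) ∧ (∀ b, b.castSucc = c → v b ≠ 0) ∧
      ∀ r, q ≤ r → z (r, Fin.last l) = (fun b : Fin l => z (r, b.castSucc)) ⬝ᵥ v}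

theorem update_dotProduct {ι R : Type*} [Fintype ι] [DecidableEq ι] [Ring R] (y v : ι → R) (c : ι)
    (s : R) : Function.update y c s ⬝ᵥ v = y ⬝ᵥ v + (s - y c) * v c := by
  have : Function.update y c s = y + Pi.single c (s - y c) := by
    ext b
    rcases eq_or_ne b c with rfl | hb <;> simp [*]
  rw [this, add_dotProduct, single_dotProduct]

theorem update_row {α : Type*} (z : Fin (m + 1) × Fin (l + 1) → α) (r : Fin (m + 1)) (c : Fin l)
    (s : α) : (fun b : Fin l => Function.update z (r, c.castSucc) s (r, b.castSucc)) =
      Function.update (fun b : Fin l => z (r, b.castSucc)) c s :=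
  Function.update_comp_eq_of_injective z
    ((Prod.mk_right_injective r).comp (Fin.castSucc_injective l)) c s

section Steps

variable {a : Fin l → K} {f : MvPolynomial (Fin (m + 1) × Fin (l + 1)) K}

theorem eval_eq_zero_of_notMem_vars {q : Fin m} {c : Fin l}
    (hqc : (q.castSucc, c.castSucc) ∉ f.vars)
    (hf : ∀ z ∈ dependencyLocus a q.castSucc c.castSucc, eval z f = 0)
    {z : Fin (m + 1) × Fin (l + 1) → K} (hz : z ∈ dependencyLocus a q.succ c.castSucc) :
    eval z f = 0 := by
  obtain ⟨hlast, v, hv0, hvc, hdep⟩ := hz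
  let s := z (q.castSucc, c.castSucc) +
    (z (q.castSucc, Fin.last l) - (fun b : Fin l => z (q.castSucc, b.castSucc)) ⬝ᵥ v) / v c
  rw [← hf (Function.update z (q.castSucc, c.castSucc) s)
    ⟨fun b => ?_, v, hv0, hvc, fun r hr => ?_⟩]
  · refine eval_congr_of_vars fun x hx => (Function.update_of_ne ?_ _ _).symm
    rintro rfl
    exact hqc hx
  · rw [Function.update_of_ne (by simp [(Fin.castSucc_lt_last q).ne']), hlast]
  · rw [Function.update_of_ne (by simp [(Fin.castSucc_lt_last c).ne'])]
    rcases hr.eq_or_lt with rfl | hqr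
    · rw [update_row, update_dotProduct, add_sub_cancel_left, div_mul_cancel₀ _ (hvc c rfl),
        add_sub_cancel]
    · rw [hdep r (Fin.castSucc_lt_iff_succ_le.mp hqr)]
      simp [hqr.ne']

-- Near `z`, the new coefficient `ε * (κ + ε)` at column `c` is small, but the entry `ε⁻¹` at
-- `(q, c)` lets it correct the defect `κ` of the relation in row `q`.
theorem exists_curve_mem_dependencyLocus {q : Fin m} {c : Fin l}
    {z : Fin (m + 1) × Fin (l + 1) → K} (hz : z ∈ dependencyLocus a q.succ c.succ) :
    ∃ γ : Fin (m + 1) × Fin (l + 1) → Polynomial K, (fun x => (γ x).eval 0) = z ∧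
      ∀ᶠ ε in Filter.cofinite, Function.update (fun x => (γ x).eval ε)
        (q.castSucc, c.castSucc) ε⁻¹ ∈ dependencyLocus a q.castSucc c.castSucc := by
  obtain ⟨hlast, v, hv0, -, hdep⟩ := hz
  have hv0' {b : Fin l} (hb : b ≤ c) : v b = 0 := hv0 b (Fin.castSucc_lt_succ_iff.mpr hb)
  let κ := z (q.castSucc, Fin.last l) - (fun b : Fin l => z (q.castSucc, b.castSucc)) ⬝ᵥ v
  let δ (r : Fin (m + 1)) : Polynomial K :=
    if r = q.castSucc then 1 else (.C κ + .X) * .C (z (r, c.castSucc))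
  let γ (x : Fin (m + 1) × Fin (l + 1)) : Polynomial K :=
    .C (z x) + if x.2 = Fin.last l then .X * δ x.1 else 0
  have hγ_init (ε : K) (r : Fin (m + 1)) (b : Fin l) :
      (γ (r, b.castSucc)).eval ε = z (r, b.castSucc) := by
    simp [γ, (Fin.castSucc_lt_last b).ne]
  have hγ_pivot (ε : K) :
      (γ (q.castSucc, Fin.last l)).eval ε = z (q.castSucc, Fin.last l) + ε := by
    simp [γ, δ]
  have hγ_last (ε : K) {r : Fin (m + 1)} (hr : r ≠ q.castSucc) : (γ (r, Fin.last l)).eval ε =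
      z (r, Fin.last l) + ε * ((κ + ε) * z (r, c.castSucc)) := by
    simp [γ, δ, hr]
  refine ⟨γ, funext fun x => by by_cases hx : x.2 = Fin.last l <;> simp [γ, hx], ?_⟩
  filter_upwards [Filter.eventually_cofinite_ne 0, Filter.eventually_cofinite_ne (-κ)]
    with ε hε hεκ
  refine ⟨fun b => ?_, v + Pi.single c (ε * (κ + ε)), fun b hb => ?_, fun b hb => ?_,
    fun r hr => ?_⟩
  · rw [Function.update_of_ne (by simp [(Fin.castSucc_lt_last q).ne']), hγ_init, hlast]
  · have hbc : b < c := Fin.castSucc_lt_castSucc_iff.mp hb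
    rw [Pi.add_apply, hv0' hbc.le, Pi.single_eq_of_ne hbc.ne, add_zero]
  · obtain rfl := Fin.castSucc_injective l hb
    rw [Pi.add_apply, hv0' le_rfl, Pi.single_eq_same, zero_add]
    exact mul_ne_zero hε fun h => hεκ (eq_neg_of_add_eq_zero_right h)
  · rw [Function.update_of_ne (by simp [(Fin.castSucc_lt_last c).ne']), dotProduct_add,
      dotProduct_single]
    rcases hr.eq_or_lt with rfl | hqr
    · simp only [update_row, hγ_init]
      rw [update_dotProduct, hv0' le_rfl, Function.update_self, inv_mul_cancel_left₀ hε, hγ_pivot]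
      ring
    · have hne (b : Fin (l + 1)) : (r, b) ≠ (q.castSucc, c.castSucc) := by simp [hqr.ne']
      simp only [Function.update_of_ne (hne _), hγ_init, hγ_last ε hqr.ne',
        hdep r (Fin.castSucc_lt_iff_succ_le.mp hqr)]
      ring

theorem eval_componentIn_degreeOf_eq_zero [Infinite K] {q : Fin m} {c : Fin l}
    (hf : ∀ z ∈ dependencyLocus a q.castSucc c.castSucc, eval z f = 0)
    {z : Fin (m + 1) × Fin (l + 1) → K} (hz : z ∈ dependencyLocus a q.succ c.succ) :
    eval z (componentIn (q.castSucc, c.castSucc) (f.degreeOf (q.castSucc, c.castSucc)) f) = 0 := by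
  obtain ⟨γ, rfl, hγ⟩ := exists_curve_mem_dependencyLocus hz
  rw [eval_componentIn,
    eval_componentIn_degreeOf_eq_zero_of_pole γ (hγ.mono fun ε hε => hf _ hε), mul_zero]

theorem exists_eval_eq_of_last_row (hlast : ∀ b : Fin l, (Fin.last m, b.castSucc) ∉ f.vars)
    (a : Fin l → K) (z : Fin (m + 1) × Fin (l + 1) → K) :
    ∃ w, eval w f = eval z f ∧ (∀ b : Fin l, w (Fin.last m, b.castSucc) = a b) ∧
      ∀ r, w (r, Fin.last l) = z (r, Fin.last l) := by
  refine ⟨fun x => if x.1 = Fin.last m then Fin.snoc (α := fun _ => K) a (z x) x.2 else z x,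
    eval_congr_of_vars fun ⟨r, b⟩ hx => ?_, fun b => by simp, fun r => by simp⟩
  induction b using Fin.lastCases with
  | last => simp
  | cast b => exact if_neg fun hr : r = Fin.last m => hlast b (hr ▸ hx)

theorem eq_zero_of_vanishing_last_row [Infinite K] (ha : ∀ b, a b ≠ 0) {c : Fin l}
    (hlast : ∀ b : Fin l, (Fin.last m, b.castSucc) ∉ f.vars)
    (hf : ∀ z ∈ dependencyLocus a (Fin.last m) c.castSucc, eval z f = 0) : f = 0 := by
  suffices h : f * X (Fin.last m, Fin.last l) = 0 from
    (mul_eq_zero.mp h).resolve_right (X_ne_zero _)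
  refine funext fun z => ?_
  rw [map_zero, map_mul, eval_X, mul_eq_zero, or_iff_not_imp_right]
  intro hz
  obtain ⟨w, hwz, hw_init, hw_last⟩ := exists_eval_eq_of_last_row hlast a z
  rw [← hwz]
  refine hf w ⟨hw_init, Pi.single c (z (Fin.last m, Fin.last l) / a c), fun b hb => ?_,
    fun b hb => ?_, fun r hr => ?_⟩
  · exact Pi.single_eq_of_ne (Fin.castSucc_lt_castSucc_iff.mp hb).ne _
  · obtain rfl := Fin.castSucc_injective l hb
    rw [Pi.single_eq_same]
    exact div_ne_zero hz (ha b)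
  · obtain rfl := Fin.last_le_iff.mp hr
    rw [dotProduct_single, hw_init, mul_div_cancel₀ _ (ha c), hw_last]

theorem exists_hasDiagonal_last_column [Infinite K] {q : Fin (m + 1)}
    (hlast : ∀ b : Fin l, (Fin.last m, b.castSucc) ∉ f.vars)
    (hf : ∀ z ∈ dependencyLocus a q (Fin.last l), eval z f = 0) (hf0 : f ≠ 0) :
    ∃ d ∈ f.support, HasDiagonal q (Fin.last l) d := by
  suffices h : ∃ r, q ≤ r ∧ (r, Fin.last l) ∈ f.vars by
    obtain ⟨r, hqr, hr⟩ := h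
    obtain ⟨d, hd, hdr⟩ := (mem_vars_iff_mem_support _).mp hr
    refine ⟨d, hd, fun _ => r, ?_, fun b hb => ?_⟩
    · rw [← Fin.top_eq_last, Set.Ici_top]
      exact Set.strictMonoOn_singleton _
    · rw [Fin.last_le_iff.mp hb]
      exact ⟨hqr, Finsupp.mem_support_iff.mp hdr⟩
  by_contra! hvars
  refine hf0 (funext fun z => ?_)
  obtain ⟨w, hwz, hw_init, hw_last⟩ := exists_eval_eq_of_last_row hlast a
    fun x => if q ≤ x.1 ∧ x.2 = Fin.last l then 0 else z x
  have hzero : eval w f = 0 := hf w ⟨hw_init, 0, fun _ _ => rfl,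
    fun b hb => absurd hb (Fin.castSucc_lt_last b).ne,
    fun r hr => by rw [hw_last, if_pos ⟨hr, rfl⟩, dotProduct_zero]⟩
  rw [map_zero, ← hzero, hwz]
  refine eval_congr_of_vars fun ⟨r, b⟩ hx => (if_neg ?_).symm
  rintro ⟨hr, rfl⟩
  exact hvars r hr hx

theorem exists_hasDiagonal [Infinite K] (ha : ∀ b, a b ≠ 0) (q : Fin (m + 1)) (c : Fin (l + 1))
    (hlast : ∀ b : Fin l, (Fin.last m, b.castSucc) ∉ f.vars)
    (hf : ∀ z ∈ dependencyLocus a q c, eval z f = 0) (hf0 : f ≠ 0) :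
    ∃ d ∈ f.support, HasDiagonal q c d := by
  induction q using Fin.reverseInduction generalizing c f with
  | last =>
    induction c using Fin.lastCases with
    | last => exact exists_hasDiagonal_last_column hlast hf hf0
    | cast c => exact absurd (eq_zero_of_vanishing_last_row ha hlast hf) hf0
  | cast q ih =>
    induction c using Fin.lastCases with
    | last => exact exists_hasDiagonal_last_column hlast hf hf0
    | cast c =>
      let x := (q.castSucc, c.castSucc)
      by_cases hx : x ∈ f.vars
      · obtain ⟨d, hd, hdiag⟩ := ih c.succ
          (fun b hb => hlast b (vars_componentIn_subset _ _ _ hb))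
          (fun z hz => eval_componentIn_degreeOf_eq_zero hf hz)
          (componentIn_degreeOf_ne_zero x hf0)
        rw [mem_support_componentIn] at hd
        refine ⟨d, hd.1, hdiag.cons ?_⟩
        rw [hd.2]
        exact mem_vars_iff_degreeOf_ne_zero.mp hx
      · obtain ⟨d, hd, hdiag⟩ := ih c.castSucc hlast
          (fun z hz => eval_eq_zero_of_notMem_vars hx hf hz) hf0
        exact ⟨d, hd, hdiag.of_succ_row⟩

end Steps
end DependencyLocus

section Parametrization

variable {m l : ℕ} {A : Type*} [CommRing A]

/-- The ideal of the `(m + 1) × (l + 1)` matrices of rank at most `l` whose last row is `a` outside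
the last column. -/
noncomputable def specializedMinors (m : ℕ) (a : Fin l → A) :
    Ideal (MvPolynomial (Fin (m + 1) × Fin (l + 1)) A) :=
  Ideal.span (Set.range fun b : Fin l => X (Fin.last m, b.castSucc) - C (a b)) ⊔
    maximalMinors (Matrix.mvPolynomialX _ _ A)

/-- The generic `(m + 1) × l` matrix with last row `a`, in the variables `Sum.inl`. -/
noncomputable def genericMatrix (m : ℕ) (a : Fin l → A) :
    Matrix (Fin (m + 1)) (Fin l) (MvPolynomial ((Fin (m + 1) × Fin l) ⊕ Fin l) A) :=
  Matrix.of fun r b => if r = Fin.last m then C (a b) else X (.inl (r, b))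

/-- The ring map corresponding to the parametrization of matrices with dependent last column by
their first `l` columns (with last row `a`) and the coefficients `Sum.inr` of the dependency. -/
noncomputable def parametrization (m : ℕ) (a : Fin l → A) :
    MvPolynomial (Fin (m + 1) × Fin (l + 1)) A →ₐ[A]
      MvPolynomial ((Fin (m + 1) × Fin l) ⊕ Fin l) A :=
  aeval fun x => Fin.snoc (α := fun _ => MvPolynomial ((Fin (m + 1) × Fin l) ⊕ Fin l) A)
    (genericMatrix m a x.1) (genericMatrix m a x.1 ⬝ᵥ fun b => X (.inr b)) x.2

theorem parametrization_X_castSucc (a : Fin l → A) (r : Fin (m + 1)) (b : Fin l) :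
    parametrization m a (X (r, b.castSucc)) = genericMatrix m a r b := by
  simp [parametrization]

theorem parametrization_X_last (a : Fin l → A) (r : Fin (m + 1)) :
    parametrization m a (X (r, Fin.last l)) = genericMatrix m a r ⬝ᵥ fun b => X (.inr b) := by
  simp [parametrization]

theorem specializedMinors_le_ker_parametrization (a : Fin l → A) :
    specializedMinors m a ≤ RingHom.ker (parametrization m a) := by
  refine sup_le (Ideal.span_le.mpr ?_) ?_
  · rintro _ ⟨b, rfl⟩
    rw [SetLike.mem_coe, RingHom.mem_ker, map_sub, parametrization_X_castSucc, ← algebraMap_eq,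
      AlgHom.commutes]
    simp [genericMatrix]
  · refine Ideal.span_le.mpr ?_
    rintro _ ⟨B, rfl⟩
    rw [SetLike.mem_coe, RingHom.mem_ker, AlgHom.map_det]
    refine det_eq_zero_of_last_col_eq_dotProduct (v := fun b => X (.inr b)) fun r => ?_
    simp [parametrization_X_last, parametrization_X_castSucc]

/-- The exponents of the monomials that form a basis modulo `specializedMinors`. -/
def IsStandard (d : Fin (m + 1) × Fin (l + 1) →₀ ℕ) : Prop :=
  (∀ b : Fin l, d (Fin.last m, b.castSucc) = 0) ∧ ¬ HasDiagonal 0 0 d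

theorem restrictSupport_isStandard_sup_specializedMinors (a : Fin l → A) :
    restrictSupport A {d | IsStandard d} ⊔ (specializedMinors m a).restrictScalars A = ⊤ := by
  refine restrictSupport_sup_eq_top diagonalWeight fun d hd => ?_
  rw [Set.mem_ofPred_eq, IsStandard, not_and_or, not_not, not_forall] at hd
  rcases hd with ⟨b, hb⟩ | ⟨B, hmono, hB⟩
  · refine ⟨Finsupp.single (Fin.last m, b.castSucc) 1,
      Finsupp.single_le_iff.mpr (Nat.one_le_iff_ne_zero.mpr hb), _,
      Submodule.mem_sup_left (Ideal.subset_span ⟨b, rfl⟩), ?_⟩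
    rw [← X, sub_sub_cancel]
    refine (monomial_mem_restrictSupport A).mpr (.inl ?_)
    simp [Finsupp.weight_single, diagonalWeight]
  · have hB' : StrictMono B := by simpa [← bot_eq_zero] using hmono
    exact ⟨∑ b, Finsupp.single (B b, b) 1,
      sum_single_one_le (fun b b' h => congrArg Prod.snd h) fun b => (hB b (Fin.zero_le b)).2, _,
      Submodule.mem_sup_right (Ideal.subset_span ⟨OrderEmbedding.ofStrictMono B hB', rfl⟩),
      diagonal_sub_det_mem_restrictSupport A (OrderEmbedding.ofStrictMono B hB')⟩

theorem aeval_eq_zero_of_mem_ker_parametrization {K : Type*} [Field K] [Algebra A K]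
    {a : Fin l → A} {g : MvPolynomial (Fin (m + 1) × Fin (l + 1)) A}
    (hg : g ∈ RingHom.ker (parametrization m a)) {z : Fin (m + 1) × Fin (l + 1) → K}
    (hz : z ∈ dependencyLocus (algebraMap A K ∘ a) 0 0) : aeval z g = 0 := by
  obtain ⟨hlast, v, -, -, hdep⟩ := hz
  let ψ : MvPolynomial ((Fin (m + 1) × Fin l) ⊕ Fin l) A →ₐ[A] K :=
    aeval (Sum.elim (fun x => z (x.1, x.2.castSucc)) v)
  have hrow (r : Fin (m + 1)) (b : Fin l) : ψ (genericMatrix m a r b) = z (r, b.castSucc) := by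
    by_cases hr : r = Fin.last m
    · simp [ψ, genericMatrix, hr, hlast]
    · simp [ψ, genericMatrix, hr]
  have hcomp : ψ.comp (parametrization m a) = aeval z := algHom_ext fun ⟨r, b⟩ => by
    rw [AlgHom.comp_apply, aeval_X]
    induction b using Fin.lastCases with
    | last =>
      rw [parametrization_X_last, hdep r (Fin.zero_le r), dotProduct, map_sum]
      simp [hrow, dotProduct, ψ]
    | cast b => rw [parametrization_X_castSucc, hrow]
  rw [← hcomp, AlgHom.comp_apply, RingHom.mem_ker.mp hg, map_zero]

theorem eq_zero_of_isStandard_of_mem_ker [IsDomain A] {a : Fin l → A} (ha : ∀ b, a b ≠ 0)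
    {g : MvPolynomial (Fin (m + 1) × Fin (l + 1)) A}
    (hstd : g ∈ restrictSupport A {d | IsStandard d})
    (hg : g ∈ RingHom.ker (parametrization m a)) : g = 0 := by
  let K := AlgebraicClosure (FractionRing A)
  have hinj : Function.Injective (algebraMap A K) :=
    (algebraMap (FractionRing A) K).injective.comp (IsFractionRing.injective A (FractionRing A))
  have hstd' {d} (hd : d ∈ (map (algebraMap A K) g).support) : IsStandard d :=
    (mem_restrictSupport_iff A).mp hstd (support_map_subset _ _ hd)
  by_contra hg0
  obtain ⟨d, hd, hdiag⟩ := exists_hasDiagonal (f := map (algebraMap A K) g)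
    (a := algebraMap A K ∘ a) (fun b => (map_ne_zero_iff _ hinj).mpr (ha b)) 0 0
    (fun b hb => by
      obtain ⟨d, hd, hdb⟩ := (mem_vars_iff_mem_support _).mp hb
      exact Finsupp.mem_support_iff.mp hdb ((hstd' hd).1 b))
    (fun z hz => by
      rw [eval_map, ← aeval_def]
      exact aeval_eq_zero_of_mem_ker_parametrization hg hz)
    ((map_ne_zero_iff _ (map_injective _ hinj)).mpr hg0)
  exact (hstd' hd).2 hdiag

theorem ker_parametrization [IsDomain A] {a : Fin l → A} (ha : ∀ b, a b ≠ 0) :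
    RingHom.ker (parametrization m a) = specializedMinors m a := by
  refine le_antisymm (fun g hg => ?_) (specializedMinors_le_ker_parametrization a)
  have htop : g ∈ restrictSupport A {d | IsStandard d} ⊔
      (specializedMinors m a).restrictScalars A :=
    restrictSupport_isStandard_sup_specializedMinors a ▸ Submodule.mem_top
  obtain ⟨s, hs, p, hp, rfl⟩ := Submodule.mem_sup.mp htop
  have hsker : s ∈ RingHom.ker (parametrization m a) :=
    (Ideal.add_mem_iff_left _ (specializedMinors_le_ker_parametrization a hp)).mp hg
  rw [eq_zero_of_isStandard_of_mem_ker ha hs hsker, zero_add]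
  exact hp

theorem specializedMinors_isPrime [IsDomain A] {a : Fin l → A} (ha : ∀ b, a b ≠ 0) :
    (specializedMinors m a).IsPrime :=
  ker_parametrization ha ▸ RingHom.ker_isPrime _

end Parametrization

theorem isPrime_of_retraction {R S : Type*} [CommSemiring R] [CommSemiring S] {I : Ideal R}
    {J : Ideal S} [J.IsPrime] (φ : R →+* S) (ρ : S →+* R) (hρφ : ρ.comp φ = RingHom.id R)
    (hφ : I.map φ ≤ J) (hρ : J.map ρ ≤ I) : I.IsPrime := by
  have hI : I = J.comap φ := le_antisymm (Ideal.map_le_iff_le_comap.mp hφ) fun f hf => by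
    rw [← RingHom.id_apply f, ← hρφ]
    exact hρ (Ideal.mem_map_of_mem ρ hf)
  exact hI ▸ Ideal.comap_isPrime φ J

section Main

variable {m l : ℕ}

theorem exists_ringHom_freshVariables {σ τ k : Type*} [CommSemiring k] {ι : σ → τ}
    (hι : Function.Injective ι) :
    ∃ φ : MvPolynomial τ k →+* MvPolynomial σ (MvPolynomial τ k),
      (∀ x, φ (X (ι x)) = X x) ∧ (∀ p ∈ supported k (Set.range ι)ᶜ, φ p = C p) ∧
        (eval (X ∘ ι)).comp φ = RingHom.id _ := by
  let φ : MvPolynomial τ k →ₐ[k] MvPolynomial σ (MvPolynomial τ k) :=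
    aeval (Function.extend ι X (C ∘ X))
  have hφι (x) : φ (X (ι x)) = X x := by rw [aeval_X, hι.extend_apply]
  refine ⟨φ.toRingHom, hφι, ?_, ?_⟩
  · have hφC : Set.EqOn φ (IsScalarTower.toAlgHom k (MvPolynomial τ k) _)
        (supported k (Set.range ι)ᶜ) := by
      refine AlgHom.eqOn_adjoin_iff.mpr ?_
      rintro _ ⟨s, hs, rfl⟩
      rw [aeval_X, Function.extend_apply' _ _ _ hs]
      rfl
    exact fun p hp => hφC hp
  · refine ringHom_ext (fun r => ?_) fun s => ?_
    · simp [φ, MvPolynomial.algebraMap_apply]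
    · by_cases hs : s ∈ Set.range ι
      · obtain ⟨x, rfl⟩ := hs
        simp [hφι]
      · simp [φ, Function.extend_apply' _ _ _ hs]

theorem span_sup_maximalMinors_isPrime {τ k : Type*} [CommRing k] [IsDomain k]
    {ι : Fin (m + 1) × Fin (l + 1) → τ} (hι : Function.Injective ι) (S : Set (Fin l))
    {a : Fin l → MvPolynomial τ k} (ha0 : ∀ b ∈ S, a b ≠ 0)
    (ha : ∀ b ∈ S, a b ∈ supported k (Set.range ι)ᶜ) :
    (Ideal.span ((fun b => X (ι (Fin.last m, b.castSucc)) - a b) '' S) ⊔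
      maximalMinors (Matrix.of fun r c => X (ι (r, c)))).IsPrime := by
  classical
  obtain ⟨φ, hφι, hφC, hretract⟩ := exists_ringHom_freshVariables (k := k) hι
  let a' : Fin l → MvPolynomial τ k := S.piecewise a fun b => X (ι (Fin.last m, b.castSucc))
  have ha'0 (b : Fin l) : a' b ≠ 0 := by
    by_cases hb : b ∈ S <;> simp [a', hb, ha0]
  have := specializedMinors_isPrime (m := m) ha'0
  refine isPrime_of_retraction (J := specializedMinors m a') φ (eval (X ∘ ι)) hretract ?_ ?_
  · rw [Ideal.map_sup, map_maximalMinors, Ideal.map_span, ← Set.image_comp]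
    refine sup_le_sup (Ideal.span_mono ?_) (le_of_eq ?_)
    · rintro _ ⟨b, hb, rfl⟩
      exact ⟨b, by simp [hφι, hφC _ (ha b hb), a', hb]⟩
    · congr 1
      ext r c
      simp [hφι]
  · rw [specializedMinors, Ideal.map_sup, map_maximalMinors, Ideal.map_span, ← Set.range_comp]
    refine sup_le_sup (Ideal.span_le.mpr ?_) (le_of_eq ?_)
    · rintro _ ⟨b, rfl⟩
      by_cases hb : b ∈ S
      · exact Ideal.subset_span ⟨b, hb, by simp [a', hb]⟩
      · simp [a', hb]
    · congr 1
      ext r c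
      simp

theorem span_sup_maximalMinors_succ_isPrime {k : Type*} [CommRing k] [IsDomain k] {i : ℕ}
    (hi : i ≤ l) (hl : l ≤ m + 1) :
    (Ideal.span {f : MvPolynomial (Option (Fin (m + 2) × Fin (m + 2))) k | ∃ c : Fin (m + 2),
        (c : ℕ) < i ∧ f = X none * X (some (0, c)) + X (some (Fin.last (m + 1), c))} ⊔
      maximalMinors (Matrix.of fun (r : Fin (m + 1)) (c : Fin (l + 1)) =>
        X (some (r.succ, c.castLE (Nat.succ_le_succ hl))))).IsPrime := by
  let ι (x : Fin (m + 1) × Fin (l + 1)) : Option (Fin (m + 2) × Fin (m + 2)) :=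
    some (x.1.succ, x.2.castLE (Nat.succ_le_succ hl))
  have hι : Function.Injective ι := (Option.some_injective _).comp
    ((Fin.succ_injective _).prodMap (Fin.castLE_injective (Nat.succ_le_succ hl)))
  let a (b : Fin l) : MvPolynomial (Option (Fin (m + 2) × Fin (m + 2))) k :=
    -(X none * X (some (0, b.castLE (Nat.le_succ_of_le hl))))
  have ha0 (b : Fin l) : a b ≠ 0 := neg_ne_zero.mpr (mul_ne_zero (X_ne_zero _) (X_ne_zero _))
  have ha (b : Fin l) : a b ∈ supported k (Set.range ι)ᶜ :=
    neg_mem (mul_mem (X_mem_supported.mpr (by simp [ι]))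
      (X_mem_supported.mpr (by simp [ι])))
  have hspan : {f | ∃ c : Fin (m + 2),
      (c : ℕ) < i ∧ f = X none * X (some (0, c)) + X (some (Fin.last (m + 1), c))} =
      (fun b => X (ι (Fin.last m, b.castSucc)) - a b) '' {b | (b : ℕ) < i} := by
    have hgen (b : Fin l) : X (ι (Fin.last m, b.castSucc)) - a b =
        X none * X (some (0, b.castLE (Nat.le_succ_of_le hl))) +
          X (some (Fin.last (m + 1), b.castLE (Nat.le_succ_of_le hl))) :=
      (sub_neg_eq_add _ _).trans (add_comm _ _)
    ext f
    constructor
    · rintro ⟨c, hc, rfl⟩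
      exact ⟨⟨c, hc.trans_le hi⟩, hc, hgen _⟩
    · rintro ⟨b, hb, rfl⟩
      exact ⟨b.castLE (Nat.le_succ_of_le hl), hb, hgen b⟩
  rw [hspan]
  exact span_sup_maximalMinors_isPrime hι _ (fun b _ => ha0 b) fun b _ => ha b

theorem span_det_succ_rows_eq_maximalMinors {τ k : Type*} [CommRing k]
    (M : Matrix (Fin (m + 1)) (Fin l) (MvPolynomial τ k)) :
    Ideal.span {f | ∃ B : Fin l → Fin (m + 1), StrictMono B ∧ (∀ a, 1 ≤ (B a : ℕ)) ∧
      f = (M.submatrix B id).det} = maximalMinors (M.submatrix Fin.succ id) := by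
  refine congrArg Ideal.span (Set.ext fun f => ⟨?_, ?_⟩)
  · rintro ⟨B, hB, hB1, rfl⟩
    have hB0 (a : Fin l) : B a ≠ 0 := fun h => by simpa [h] using hB1 a
    refine ⟨OrderEmbedding.ofStrictMono (fun a => (B a).pred (hB0 a))
      fun a b hab => Fin.pred_lt_pred_iff.mpr (hB hab), congrArg Matrix.det ?_⟩
    ext1 a b
    exact congrArg (M · b) (Fin.succ_pred (B a) (hB0 a))
  · rintro ⟨B, rfl⟩
    exact ⟨Fin.succ ∘ B, Fin.strictMono_succ.comp B.strictMono, fun a => Nat.succ_pos _, rfl⟩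

end Main

theorem Jt_add_Kt_isPrime_general {k : Type*} [CommRing k] [IsDomain k] {n : ℕ} [NeZero n]
    (hn : 2 ≤ n) {i j : ℕ} (hij : i < j) (hj : j ≤ n) :
    (Ideal.span {f : MvPolynomial (Option (Fin n × Fin n)) k | ∃ c : Fin n,
        (c : ℕ) < i ∧ f = X none * X (some (row1 n, c)) + X (some (rowN n, c))} ⊔
      Ideal.span {f | ∃ B : Fin j → Fin n, StrictMono B ∧ (∀ a, 1 ≤ (B a : ℕ)) ∧
        f = Matrix.det (Matrix.of fun a b => X (some (B a, b.castLE hj)))}).IsPrime := by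
  obtain ⟨m, rfl⟩ := Nat.exists_eq_add_of_le' hn
  obtain ⟨l, rfl⟩ := Nat.exists_eq_add_of_le' (Nat.one_le_of_lt hij)
  have h := span_sup_maximalMinors_succ_isPrime (k := k) (Nat.le_of_lt_succ hij)
    (Nat.le_of_succ_le_succ hj)
  exact span_det_succ_rows_eq_maximalMinors
    (Matrix.of fun r (c : Fin (l + 1)) =>
      (X (some (r, c.castLE hj)) : MvPolynomial (Option (Fin (m + 2) × Fin (m + 2))) k)) ▸ h

theorem Kt_eq_span {n : ℕ} [NeZero n] {j : ℕ} (hj : j ≤ n) : Kt n j =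
    Ideal.span {f | ∃ B : Fin j → Fin n, StrictMono B ∧ (∀ a, 1 ≤ (B a : ℕ)) ∧
      f = Matrix.det (Matrix.of fun a b => X (some (B a, b.castLE hj)))} := by
  simp only [Kt, zz, Nat.mod_eq_of_lt (Fin.is_lt _ |>.trans_le hj)]
  rfl

/-- For all `0 ≤ i < j ≤ n`, the ideal `J_i^t + K_j` of `ℂ[t, z_{11}, …, z_{nn}]`
is prime. -/
theorem Jt_add_Kt_isPrime (n : ℕ) [NeZero n] (hn : 2 ≤ n) (i j : ℕ)
    (hij : i < j) (hj : j ≤ n) : (Jt n i + Kt n j).IsPrime := by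
  rw [Kt_eq_span hj]
  exact Jt_add_Kt_isPrime_general hn hij hj
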